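/- Constant-cost updates: let D₁,…,D_k ∈ {ℕ, Bool} and, for each j = 1,…,k, let φ_j be a good F-term with variables among x₁ : D₁, …, x_k : D_k denoting f_j = ⟦φ_j⟧ : D₁×⋯×D_k → D_j. Then there exist natural numbers K_min and L_min such that for all K ≥ K_min and L ≥ L_min there is a Λ_F-term θ with the property: for every (a₁,…,a_k) ∈ D₁×⋯×D_k, the leftmost reduction strategy takes θ⌜a₁⌝⋯⌜a_k⌝ to θ⌜f₁(a₁,…,a_k)⌝⋯⌜f_k(a₁,…,a_k)⌝, by a sequence of reductions consisting of exactly K β-reductions and exactly L F-reductions. -/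

import Mathlib

/-!
The witness is `θ = W W`, where `W` is the closed, `F`-normal term
`λw. I (⋯ (I ((λy. (λz. λx₁ ⋯ x_k. w w φ₁' ⋯ φ_k') T_q) v)))` with `p` copies of `I = λx.x`.
Here `φ_j'` is `φ_j` with each variable-free subterm replaced by the encoding of its value (the
variable-free subterms would otherwise be `F`-redexes inside `θ`), `v` is the encoding of a
default value, and `T_q = y C ⋯ C` has `q` copies of `C = c_ω y v₂ ⋯ v_ℓ`.

Run on `⌜a₁⌝, …, ⌜a_k⌝`, the leftmost strategy spends one β-step on `W W`, then `p` on the copies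
of `I`, then one on `y`. The last creates `q` `F`-redexes in `T_q`, which are contracted before
`T_q` is erased by one more β-step. Then `x₁, …, x_k` are consumed one β-step each. Since `F`-redexes
take precedence, after `m` of these steps every `φ_j'` has had exactly its subterms with variables
among `x₁, …, x_m` evaluated (`Good.partialEnc`), at a cost of one `F`-step per newly evaluated node
(`Good.fsteps_subst_partialEnc`). That cost depends on `m` and `φ_j` only, not on the arguments.
The totals are `K = p + k + 3` and `L = q + ∑ j, N_j`, with `N_j` the number of nodes of
`φ_j` containing a variable; `p` and `q` are arbitrary.

The side conditions of the leftmost `F`-strategy are automatic when a subterm has an `F`-step: an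
`F`-redex has no `F`-redex as a proper subterm (`LamF.IsFRedex.fNormal`), so a term with an
`F`-step in one of its two parts is not itself an `F`-redex.
-/

/-- The two datatypes: natural numbers and Booleans. -/
inductive Dt : Type
  | nat
  | bool
  deriving DecidableEq

def Dt.carrier : Dt → Type
  | .nat => ℕ
  | .bool => Bool

instance Dt.decEqCarrier : (D : Dt) → DecidableEq D.carrier
  | .nat => inferInstanceAs (DecidableEq ℕ)
  | .bool => inferInstanceAs (DecidableEq Bool)

/-- A family `F` of typed functions over the datatypes. -/
structure Sig where
  Sym : Type
  arity : Sym → ℕ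
  dom : (f : Sym) → Fin (arity f) → Dt
  cod : Sym → Dt
  interp : (f : Sym) → ((i : Fin (arity f)) → (dom f i).carrier) → (cod f).carrier

/-- Terms of the `Λ_F`-calculus (de Bruijn representation, so α-equivalence is equality). -/
inductive LamF (S : Sig) : Type
  | var : ℕ → LamF S
  | const : S.Sym → LamF S
  | app : LamF S → LamF S → LamF S
  | lam : LamF S → LamF S

namespace LamF

variable {S : Sig}

def lift (d : ℕ) : LamF S → LamF S
  | var n => if n < d then var n else var (n + 1)
  | const c => const c
  | app M N => app (lift d M) (lift d N)
  | lam M => lam (lift (d + 1) M)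

def subst : LamF S → ℕ → LamF S → LamF S
  | var n, k, N => if n = k then N else if k < n then var (n - 1) else var n
  | const c, _, _ => const c
  | app A B, k, N => app (subst A k N) (subst B k N)
  | lam A, k, N => lam (subst A (k + 1) (lift 0 N))

def apps : LamF S → List (LamF S) → LamF S := List.foldl app

def Ktrue : LamF S := lam (lam (var 1))
def Kfalse : LamF S := lam (lam (var 0))

def num : ℕ → LamF S
  | 0 => lam (app (app (var 0) Ktrue) Kfalse)
  | n + 1 => lam (app (app (var 0) Kfalse) (num n))

/-- Encoding of an element of a datatype as a `Λ_F`-term. -/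
def enc : (D : Dt) → D.carrier → LamF S
  | .nat, n => num n
  | .bool, b => cond b Ktrue Kfalse

/-- One-step β-reduction. -/
inductive BStep : LamF S → LamF S → Prop
  | beta (M N : LamF S) : BStep (app (lam M) N) (subst M 0 N)
  | appL {M M' : LamF S} (N : LamF S) : BStep M M' → BStep (app M N) (app M' N)
  | appR (M : LamF S) {N N' : LamF S} : BStep N N' → BStep (app M N) (app M N')
  | abs {M M' : LamF S} : BStep M M' → BStep (lam M) (lam M')

/-- The `F`-axioms: `c_f ⌜a₁⌝ ⋯ ⌜a_k⌝ → ⌜f(a₁,…,a_k)⌝` (root redexes). -/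
inductive FAx : LamF S → LamF S → Prop
  | intro (f : S.Sym) (a : (i : Fin (S.arity f)) → (S.dom f i).carrier) :
      FAx (apps (const f) (List.ofFn fun i => enc (S.dom f i) (a i)))
          (enc (S.cod f) (S.interp f a))

/-- One-step `F`-reduction: contextual closure of the `F`-axioms. -/
inductive FStep : LamF S → LamF S → Prop
  | ax {M N : LamF S} : FAx M N → FStep M N
  | appL {M M' : LamF S} (N : LamF S) : FStep M M' → FStep (app M N) (app M' N)
  | appR (M : LamF S) {N N' : LamF S} : FStep N N' → FStep (app M N) (app M N')
  | abs {M M' : LamF S} : FStep M M' → FStep (lam M) (lam M')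

def BStar : LamF S → LamF S → Prop := Relation.ReflTransGen BStep
def FStar : LamF S → LamF S → Prop := Relation.ReflTransGen FStep

/-- One-step reduction of the `Λ_F`-calculus: β or F. -/
def Step (M N : LamF S) : Prop := BStep M N ∨ FStep M N

def Star : LamF S → LamF S → Prop := Relation.ReflTransGen Step

/-- `M` is an `F`-redex. -/
def IsFRedex (M : LamF S) : Prop := ∃ N, FAx M N

/-- `M` contains an `F`-redex (equivalently: some `F`-step applies to `M`). -/
def HasF (M : LamF S) : Prop := ∃ N, FStep M N

def size : LamF S → ℕ
  | var _ => 1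
  | const _ => 1
  | app A B => size A + size B + 1
  | lam A => size A + 1
def IsAbs : LamF S → Prop
  | lam _ => True
  | _ => False

/-- `M` is β-normal. -/
def BNormal (M : LamF S) : Prop := ∀ N, ¬ BStep M N

/-- Contraction of the leftmost `F`-redex. -/
inductive LFStep : LamF S → LamF S → Prop
  | ax {M N : LamF S} : FAx M N → LFStep M N
  | abs {A A' : LamF S} : LFStep A A' → LFStep (lam A) (lam A')
  | appL {A A' : LamF S} (B : LamF S) :
      ¬ IsFRedex (app A B) → LFStep A A' → LFStep (app A B) (app A' B)
  | appR (A : LamF S) {B B' : LamF S} :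
      ¬ IsFRedex (app A B) → ¬ HasF A → LFStep B B' → LFStep (app A B) (app A B')

/-- Contraction of the leftmost β-redex. -/
inductive LBStep : LamF S → LamF S → Prop
  | beta (A B : LamF S) : LBStep (app (lam A) B) (subst A 0 B)
  | abs {A A' : LamF S} : LBStep A A' → LBStep (lam A) (lam A')
  | appL {A A' : LamF S} (B : LamF S) : ¬ IsAbs A → LBStep A A' → LBStep (app A B) (app A' B)
  | appR (A : LamF S) {B B' : LamF S} :
      ¬ IsAbs A → BNormal A → LBStep B B' → LBStep (app A B) (app A B')

/-- `LSeq M b f N`: the leftmost reduction strategy of `Λ_F` (leftmost `F`-redex if any,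
otherwise leftmost β-redex) takes `M` to `N` using exactly `b` β-reductions and
`f` `F`-reductions. -/
inductive LSeq : LamF S → ℕ → ℕ → LamF S → Prop
  | refl (M : LamF S) : LSeq M 0 0 M
  | fstep {M P N : LamF S} {b f : ℕ} : LFStep M P → LSeq P b f N → LSeq M b (f + 1) N
  | bstep {M P N : LamF S} {b f : ℕ} : ¬ HasF M → LBStep M P → LSeq P b f N → LSeq M (b + 1) f N
end LamF

/-- Good `F`-terms with variables `x₁ : Γ 0, …, x_k : Γ (k-1)`, of type `D`:
abstraction-free, each constant fully applied, type-correctly. -/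
inductive Good (S : Sig) (k : ℕ) (Γ : Fin k → Dt) : Dt → Type
  | var (i : Fin k) : Good S k Γ (Γ i)
  | node (f : S.Sym) (args : (i : Fin (S.arity f)) → Good S k Γ (S.dom f i)) :
      Good S k Γ (S.cod f)

namespace Good

variable {S : Sig} {k : ℕ} {Γ : Fin k → Dt}

/-- The function denoted by a good `F`-term (composition of the functions of `F`). -/
def eval : {D : Dt} → Good S k Γ D → ((i : Fin k) → (Γ i).carrier) → D.carrier
  | _, .var i, a => a i
  | _, .node f args, a => S.interp f fun i => (args i).eval a

/-- `t[⌜a₁⌝/x₁, …, ⌜a_k⌝/x_k]` : the closed `Λ_F`-term obtained by substituting the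
encodings of the `a i` for the variables of `t`. -/
def substEnc : {D : Dt} → Good S k Γ D → ((i : Fin k) → (Γ i).carrier) → LamF S
  | _, .var i, a => LamF.enc (Γ i) (a i)
  | _, .node f args, a => LamF.apps (.const f) (List.ofFn fun i => (args i).substEnc a)

/-- Number of occurrences of constants `c_f` in a good `F`-term. -/
def nconsts : {D : Dt} → Good S k Γ D → ℕ
  | _, .var _ => 0
  | _, .node _ args => 1 + ∑ i, (args i).nconsts

end Good

/-- `F` contains a function ω : B₁×⋯×B_ℓ → B_i (ℓ ≥ 1, 1 ≤ i ≤ ℓ) and, for each j,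
a constant ν_j ∈ B_j. -/
def Sig.PadAssump (S : Sig) : Prop :=
  ∃ w : S.Sym, 1 ≤ S.arity w ∧ (∃ i : Fin (S.arity w), S.cod w = S.dom w i) ∧
    ∀ j : Fin (S.arity w), ∃ c : S.Sym, S.arity c = 0 ∧ S.cod c = S.dom w j

/-! ### Closed terms -/

namespace LamF

variable {S : Sig}

/-- All free variables of the term are below `d`. -/
def ClosedAt : ℕ → LamF S → Prop
  | d, var n => n < d
  | _, const _ => True
  | d, app A B => ClosedAt d A ∧ ClosedAt d B
  | d, lam A => ClosedAt (d + 1) A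

theorem ClosedAt.mono {M : LamF S} : ∀ {d e : ℕ}, ClosedAt d M → d ≤ e → ClosedAt e M := by
  induction M with
  | var n => intro d e h hde; exact lt_of_lt_of_le h hde
  | const c => intros; trivial
  | app A B ihA ihB => intro d e h hde; exact ⟨ihA h.1 hde, ihB h.2 hde⟩
  | lam A ih => intro d e h hde; exact ih (d := d + 1) (e := e + 1) h (by omega)

theorem ClosedAt.lift {M : LamF S} : ∀ {d j : ℕ}, ClosedAt d M → d ≤ j → M.lift j = M := by
  induction M with
  | var n =>
    intro d j h hj
    have : n < j := lt_of_lt_of_le h hj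
    simp [LamF.lift, this]
  | const c => intros; rfl
  | app A B ihA ihB => intro d j h hj; simp [LamF.lift, ihA h.1 hj, ihB h.2 hj]
  | lam A ih =>
    intro d j h hj
    simp [LamF.lift, ih (d := d + 1) (j := j + 1) h (by omega)]

theorem ClosedAt.subst {M : LamF S} :
    ∀ {d j : ℕ} {N : LamF S}, ClosedAt d M → d ≤ j → M.subst j N = M := by
  induction M with
  | var n =>
    intro d j N h hj
    have : n < j := lt_of_lt_of_le h hj
    simp [LamF.subst, this.ne, this.le, not_lt]
  | const c => intros; rfl
  | app A B ihA ihB => intro d j N h hj; simp [LamF.subst, ihA h.1 hj, ihB h.2 hj]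
  | lam A ih =>
    intro d j N h hj
    simp [LamF.subst, ih (d := d + 1) (j := j + 1) h (by omega)]

theorem closedAt_apps {d : ℕ} (l : List (LamF S)) :
    ∀ {H : LamF S}, ClosedAt d H → (∀ x ∈ l, ClosedAt d x) → ClosedAt d (apps H l) := by
  induction l with
  | nil => intro H h _; exact h
  | cons x l ih =>
    intro H h hl
    exact ih (H := app H x) ⟨h, hl x (by simp)⟩ fun y hy => hl y (by simp [hy])

theorem closedAt_enc (D : Dt) (v : D.carrier) (d : ℕ) : ClosedAt d (enc D v : LamF S) := by
  suffices ClosedAt 0 (enc D v : LamF S) from this.mono (Nat.zero_le _)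
  cases D with
  | bool => cases v <;> simp [enc, Ktrue, Kfalse, ClosedAt]
  | nat =>
    change ClosedAt 0 (num v)
    induction v with
    | zero => simp [num, Ktrue, Kfalse, ClosedAt]
    | succ n ih =>
      have ih' : ClosedAt 1 (num n : LamF S) := ClosedAt.mono ih (by omega)
      simp [num, Kfalse, ClosedAt, ih']

theorem lift_enc (D : Dt) (v : D.carrier) (j : ℕ) : (enc D v : LamF S).lift j = enc D v :=
  (closedAt_enc D v 0).lift (Nat.zero_le _)

theorem subst_enc (D : Dt) (v : D.carrier) (j : ℕ) (N : LamF S) :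
    (enc D v).subst j N = enc D v :=
  (closedAt_enc D v 0).subst (Nat.zero_le _)

/-! ### Spines -/

theorem apps_concat (H : LamF S) (l : List (LamF S)) (x : LamF S) :
    apps H (l ++ [x]) = app (apps H l) x := by
  simp [apps]

theorem subst_apps (l : List (LamF S)) (j : ℕ) (N : LamF S) :
    ∀ H : LamF S, (apps H l).subst j N = apps (H.subst j N) (l.map fun x => x.subst j N) := by
  induction l with
  | nil => intro H; rfl
  | cons x l ih => intro H; exact ih (app H x)

theorem apps_const_inj {f g : S.Sym} (l : List (LamF S)) :
    ∀ {l' : List (LamF S)}, apps (const f) l = apps (const g) l' → f = g ∧ l = l' := by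
  induction l using List.reverseRecOn with
  | nil =>
    intro l' h
    rcases List.eq_nil_or_concat l' with rfl | ⟨l', y, rfl⟩
    · exact ⟨by simpa [apps] using h, rfl⟩
    · rw [List.concat_eq_append, apps_concat] at h; simp [apps] at h
  | append_singleton l x ih =>
    intro l' h
    rw [apps_concat] at h
    rcases List.eq_nil_or_concat l' with rfl | ⟨l', y, rfl⟩
    · simp [apps] at h
    · rw [List.concat_eq_append, apps_concat] at h
      injection h with h1 h2
      obtain ⟨h3, h4⟩ := ih h1
      exact ⟨h3, by simp [h4, h2]⟩

/-- The head of the application spine is a constant. -/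
def ConstHead : LamF S → Prop
  | const _ => True
  | app A _ => ConstHead A
  | _ => False

theorem constHead_apps (l : List (LamF S)) :
    ∀ {H : LamF S}, ConstHead (apps H l) ↔ ConstHead H := by
  induction l with
  | nil => intro H; rfl
  | cons x l ih => intro H; exact ih (H := app H x)

theorem not_isAbs_apps {H : LamF S} (hH : ¬ IsAbs H) (l : List (LamF S)) :
    ¬ IsAbs (apps H l) := by
  rcases List.eq_nil_or_concat l with rfl | ⟨l, x, rfl⟩
  · exact hH
  · rw [List.concat_eq_append, apps_concat]; exact id

theorem IsAbs.not_constHead {M : LamF S} (h : IsAbs M) : ¬ ConstHead M := by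
  cases M <;> first | exact id | exact h.elim

theorem isAbs_enc (D : Dt) (v : D.carrier) : IsAbs (enc D v : LamF S) := by
  cases D with
  | bool => cases v <;> trivial
  | nat => cases v <;> trivial

/-! ### Terms without `F`-redexes -/

theorem FAx.constHead {M N : LamF S} (h : FAx M N) : ConstHead M := by
  obtain ⟨f, a⟩ := h
  exact (constHead_apps _).2 trivial

theorem not_hasF_lam {A : LamF S} (h : ¬ HasF A) : ¬ HasF (lam A) := by
  rintro ⟨N, hN⟩
  cases hN with
  | ax h' => exact h'.constHead
  | abs h' => exact h ⟨_, h'⟩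

theorem not_hasF_var (n : ℕ) : ¬ HasF (var n : LamF S) := by
  rintro ⟨N, hN⟩
  cases hN with
  | ax h' => exact h'.constHead

theorem not_hasF_app {A B : LamF S} (h : ¬ IsFRedex (app A B)) (hA : ¬ HasF A) (hB : ¬ HasF B) :
    ¬ HasF (app A B) := by
  rintro ⟨N, hN⟩
  cases hN with
  | ax h' => exact h ⟨_, h'⟩
  | appL _ h' => exact hA ⟨_, h'⟩
  | appR _ h' => exact hB ⟨_, h'⟩

theorem not_hasF_app_of_head {A B : LamF S} (h : ¬ ConstHead A) (hA : ¬ HasF A)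
    (hB : ¬ HasF B) : ¬ HasF (app A B) :=
  not_hasF_app (fun ⟨_, h'⟩ => h h'.constHead) hA hB

theorem not_hasF_apps_of_head (l : List (LamF S)) :
    ∀ {H : LamF S}, ¬ ConstHead H → ¬ HasF H → (∀ x ∈ l, ¬ HasF x) → ¬ HasF (apps H l) := by
  induction l with
  | nil => intro H _ h _; exact h
  | cons x l ih =>
    intro H h hH hl
    exact ih (H := app H x) h (not_hasF_app_of_head h hH (hl x (by simp)))
      fun y hy => hl y (by simp [hy])

theorem not_hasF_enc (D : Dt) (v : D.carrier) : ¬ HasF (enc D v : LamF S) := by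
  have hT : ¬ HasF (Ktrue : LamF S) := not_hasF_lam (not_hasF_lam (not_hasF_var _))
  have hF : ¬ HasF (Kfalse : LamF S) := not_hasF_lam (not_hasF_lam (not_hasF_var _))
  have key : ∀ {A B : LamF S}, ¬ HasF A → ¬ HasF B → ¬ HasF (lam (app (app (var 0) A) B)) :=
    fun hA hB => not_hasF_lam <| not_hasF_app_of_head id
      (not_hasF_app_of_head id (not_hasF_var _) hA) hB
  cases D with
  | bool => cases v; exacts [hF, hT]
  | nat =>
    change ¬ HasF (num v)
    induction v with
    | zero => exact key hT hF
    | succ n ih => exact key hF ih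

/-- A constant applied to `F`-normal arguments is `F`-normal if arguments are missing. -/
theorem not_hasF_const_apps {f : S.Sym} (l : List (LamF S)) (hl : ∀ x ∈ l, ¬ HasF x)
    (hlen : l.length < S.arity f) : ¬ HasF (apps (const f) l) := by
  have hred : ∀ l : List (LamF S), l.length < S.arity f → ¬ IsFRedex (apps (const f) l) := by
    rintro l hlen ⟨N, hN⟩
    generalize hM : apps (const f) l = M at hN
    obtain ⟨g, a⟩ := hN
    obtain ⟨rfl, rfl⟩ := apps_const_inj _ hM
    simp at hlen
  induction l using List.reverseRecOn with
  | nil =>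
    rintro ⟨N, hN⟩
    cases hN with
    | ax h' => exact hred [] hlen ⟨_, h'⟩
  | append_singleton l x ih =>
    have hr := hred _ hlen
    rw [apps_concat] at hr ⊢
    simp only [List.length_append, List.length_singleton] at hlen
    exact not_hasF_app hr (ih (fun y hy => hl y (by simp [hy])) (by omega)) (hl x (by simp))

/-- A constant fully applied to `F`-normal arguments is `F`-normal if one of the arguments is not
an abstraction, as encodings are abstractions. -/
theorem not_hasF_const_apps_ofFn {f : S.Sym} (M : Fin (S.arity f) → LamF S)
    (hM : ∀ i, ¬ HasF (M i)) (i : Fin (S.arity f)) (hi : ¬ IsAbs (M i)) :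
    ¬ HasF (apps (const f) (List.ofFn M)) := by
  have hr : ¬ IsFRedex (apps (const f) (List.ofFn M)) := by
    rintro ⟨N, hN⟩
    generalize hP : apps (const f) (List.ofFn M) = P at hN
    obtain ⟨g, a⟩ := hN
    obtain ⟨rfl, h⟩ := apps_const_inj _ hP
    have h' := List.ofFn_injective h
    exact hi (by rw [h']; exact isAbs_enc _ _)
  have hmem : ∀ x ∈ List.ofFn M, ¬ HasF x := by
    intro x hx
    obtain ⟨j, rfl⟩ := (List.mem_ofFn' _ _).1 hx
    exact hM j
  have hlen : (List.ofFn M).length = S.arity f := List.length_ofFn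
  generalize List.ofFn M = l at hr hmem hlen
  rcases List.eq_nil_or_concat l with rfl | ⟨l, x, rfl⟩
  · have := i.2
    simp at hlen
    omega
  · rw [List.concat_eq_append] at *
    rw [apps_concat] at hr ⊢
    simp only [List.length_append, List.length_singleton] at hlen
    exact not_hasF_app hr (not_hasF_const_apps l (fun y hy => hmem y (by simp [hy])) (by omega))
      (hmem x (by simp))

/-- An `F`-redex has no `F`-redex as a proper subterm. -/
theorem IsFRedex.fNormal {A B : LamF S} (h : IsFRedex (app A B)) : ¬ HasF A ∧ ¬ HasF B := by
  obtain ⟨N, hN⟩ := h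
  generalize hM : app A B = M at hN
  obtain ⟨f, a⟩ := hN
  have hmem : ∀ x ∈ List.ofFn fun i => (enc (S.dom f i) (a i) : LamF S), ¬ HasF x := by
    intro x hx
    obtain ⟨j, rfl⟩ := (List.mem_ofFn' _ _).1 hx
    exact not_hasF_enc _ _
  have hlen : (List.ofFn fun i => (enc (S.dom f i) (a i) : LamF S)).length = S.arity f :=
    List.length_ofFn
  generalize (List.ofFn fun i => (enc (S.dom f i) (a i) : LamF S)) = l at hM hmem hlen
  rcases List.eq_nil_or_concat l with rfl | ⟨l, x, rfl⟩
  · simp [apps] at hM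
  · rw [List.concat_eq_append] at *
    rw [apps_concat] at hM
    injection hM with h1 h2
    subst h1 h2
    simp only [List.length_append, List.length_singleton] at hlen
    exact ⟨not_hasF_const_apps l (fun y hy => hmem y (by simp [hy])) (by omega),
      hmem _ (by simp)⟩

/-! ### Sequences of leftmost `F`-steps -/

theorem LFStep.hasF {M N : LamF S} (h : LFStep M N) : HasF M := by
  induction h with
  | ax h => exact ⟨_, .ax h⟩
  | abs _ ih => obtain ⟨_, h⟩ := ih; exact ⟨_, .abs h⟩
  | appL B _ _ ih => obtain ⟨_, h⟩ := ih; exact ⟨_, .appL _ h⟩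
  | appR A _ _ _ ih => obtain ⟨_, h⟩ := ih; exact ⟨_, .appR _ h⟩

/-- `FSteps n M N`: the term `M` reaches `N` by contracting the leftmost `F`-redex `n` times. -/
inductive FSteps : ℕ → LamF S → LamF S → Prop
  | refl (M : LamF S) : FSteps 0 M M
  | step {n : ℕ} {M P N : LamF S} : LFStep M P → FSteps n P N → FSteps (n + 1) M N

theorem FSteps.trans {n m : ℕ} {M P N : LamF S} (h : FSteps n M P) (h' : FSteps m P N) :
    FSteps (n + m) M N := by
  induction h with
  | refl M => simpa using h'
  | step hs _ ih => rw [Nat.add_right_comm]; exact .step hs (ih h')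

theorem FSteps.lam {n : ℕ} {M N : LamF S} (h : FSteps n M N) : FSteps n (lam M) (lam N) := by
  induction h with
  | refl M => exact .refl _
  | step hs _ ih => exact .step (.abs hs) ih

theorem FSteps.appL {n : ℕ} {M N : LamF S} (h : FSteps n M N) (B : LamF S) :
    FSteps n (app M B) (app N B) := by
  induction h with
  | refl M => exact .refl _
  | step hs _ ih => exact .step (.appL B (fun hr => hr.fNormal.1 hs.hasF) hs) ih

theorem FSteps.appR {n : ℕ} {M N : LamF S} (h : FSteps n M N) {A : LamF S} (hA : ¬ HasF A) :
    FSteps n (app A M) (app A N) := by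
  induction h with
  | refl M => exact .refl _
  | step hs _ ih => exact .step (.appR A (fun hr => hr.fNormal.2 hs.hasF) hA hs) ih

theorem FSteps.apps {n : ℕ} (l : List (LamF S)) :
    ∀ {M N : LamF S}, FSteps n M N → FSteps n (apps M l) (apps N l) := by
  induction l with
  | nil => intro M N h; exact h
  | cons x l ih => intro M N h; exact ih (h.appL x)

/-- Leftmost `F`-reduction works through the arguments of a spine from left to right, provided no
proper initial segment of the spine becomes an `F`-redex. -/
theorem fsteps_apps_ofFn (H : LamF S) {r : ℕ} (M N : Fin r → LamF S) (n : Fin r → ℕ)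
    (h : ∀ i, FSteps (n i) (M i) (N i)) (hN : ∀ i, ¬ HasF (N i))
    (hH : ∀ l : List (LamF S), (∀ x ∈ l, ¬ HasF x) → l.length < r → ¬ HasF (apps H l)) :
    FSteps (∑ i, n i) (apps H (List.ofFn M)) (apps H (List.ofFn N)) := by
  induction r with
  | zero => simpa using FSteps.refl _
  | succ r ih =>
    rw [List.ofFn_succ', List.ofFn_succ', List.concat_eq_append, List.concat_eq_append,
      apps_concat, apps_concat, Fin.sum_univ_castSucc]
    have h1 := ih (fun i => M i.castSucc) (fun i => N i.castSucc) (fun i => n i.castSucc)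
      (fun i => h _) (fun i => hN _) fun l hl hlen => hH l hl (by omega)
    refine (h1.appL _).trans ((h _).appR (hH _ ?_ (by simp)))
    intro x hx
    obtain ⟨j, rfl⟩ := (List.mem_ofFn' _ _).1 hx
    exact hN _

theorem LSeq.trans {M P N : LamF S} {b f b' f' : ℕ} (h : LSeq M b f P) (h' : LSeq P b' f' N) :
    LSeq M (b + b') (f + f') N := by
  induction h with
  | refl M => simpa using h'
  | fstep hs _ ih => rw [Nat.add_right_comm _ 1]; exact .fstep hs (ih h')
  | bstep hn hs _ ih => rw [Nat.add_right_comm _ 1]; exact .bstep hn hs (ih h')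

theorem LSeq.cast {M N : LamF S} {b f b' f' : ℕ} (h : LSeq M b f N) (hb : b = b')
    (hf : f = f') : LSeq M b' f' N := by
  rwa [← hb, ← hf]

theorem FSteps.lSeq {n : ℕ} {M N : LamF S} (h : FSteps n M N) : LSeq M 0 n N := by
  induction h with
  | refl M => exact .refl M
  | step hs _ ih => exact .fstep hs ih

/-- A β-redex at the head of a spine is the leftmost one. -/
theorem lSeq_beta (A B : LamF S) (l : List (LamF S)) (hA : ¬ HasF A) (hB : ¬ HasF B)
    (hl : ∀ x ∈ l, ¬ HasF x) : LSeq (apps (app (lam A) B) l) 1 0 (apps (subst A 0 B) l) := by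
  refine .bstep (not_hasF_apps_of_head l id
    (not_hasF_app_of_head id (not_hasF_lam hA) hB) hl) ?_ (.refl _)
  clear hl
  induction l using List.reverseRecOn with
  | nil => exact .beta A B
  | append_singleton l x ih =>
    rw [apps_concat, apps_concat]
    exact .appL _ (not_isAbs_apps id l) ih

/-! ### Iterated abstractions and identities -/

/-- `λ ⋯ λ. M` with `r` abstractions. -/
def lams : ℕ → LamF S → LamF S
  | 0, M => M
  | r + 1, M => lam (lams r M)

/-- `I (I (⋯ (I M)))` with `p` copies of `I = λx.x`. -/
def idPad : ℕ → LamF S → LamF S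
  | 0, M => M
  | p + 1, M => app (lam (var 0)) (idPad p M)

theorem closedAt_lams (r : ℕ) : ∀ {d : ℕ} {M : LamF S}, ClosedAt (d + r) M →
    ClosedAt d (lams r M) := by
  induction r with
  | zero => intro d M h; exact h
  | succ r ih => intro d M h; exact ih (d := d + 1) (by rwa [Nat.add_right_comm])

theorem subst_lams {N : LamF S} (hN : ClosedAt 0 N) (r : ℕ) :
    ∀ (M : LamF S) (j : ℕ), (lams r M).subst j N = lams r (M.subst (j + r) N) := by
  induction r with
  | zero => intro M j; rfl
  | succ r ih =>
    intro M j
    simp only [lams, subst, hN.lift (Nat.zero_le _), ih]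
    rw [Nat.add_right_comm, Nat.add_assoc]

theorem not_hasF_lams {M : LamF S} (hM : ¬ HasF M) (r : ℕ) : ¬ HasF (lams r M) := by
  induction r with
  | zero => exact hM
  | succ r ih => exact not_hasF_lam ih

theorem FSteps.lams {n : ℕ} {M N : LamF S} (h : FSteps n M N) (r : ℕ) :
    FSteps n (lams r M) (lams r N) := by
  induction r with
  | zero => exact h
  | succ r ih => exact ih.lam

theorem closedAt_idPad {d : ℕ} {M : LamF S} (hM : ClosedAt d M) (p : ℕ) :
    ClosedAt d (idPad p M) := by
  induction p with
  | zero => exact hM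
  | succ p ih => exact ⟨Nat.succ_pos d, ih⟩

theorem subst_idPad (M N : LamF S) (j p : ℕ) :
    (idPad p M).subst j N = idPad p (M.subst j N) := by
  induction p with
  | zero => rfl
  | succ p ih => simp [idPad, subst, ih]

theorem not_hasF_idPad {M : LamF S} (hM : ¬ HasF M) (p : ℕ) : ¬ HasF (idPad p M) := by
  induction p with
  | zero => exact hM
  | succ p ih => exact not_hasF_app_of_head id (not_hasF_lam (not_hasF_var 0)) ih

theorem lSeq_idPad {M : LamF S} (hM : ¬ HasF M) (l : List (LamF S)) (hl : ∀ x ∈ l, ¬ HasF x)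
    (p : ℕ) : LSeq (apps (idPad p M) l) p 0 (apps M l) := by
  induction p with
  | zero => exact .refl _
  | succ p ih =>
    have := (lSeq_beta (var 0) (idPad p M) l (not_hasF_var 0) (not_hasF_idPad hM p) hl).trans ih
    rwa [Nat.add_comm] at this

end LamF

/-! ### Partially evaluated good terms -/

instance Dt.inhabitedCarrier : (D : Dt) → Inhabited D.carrier
  | .nat => inferInstanceAs (Inhabited ℕ)
  | .bool => inferInstanceAs (Inhabited Bool)

namespace Good

open LamF

variable {S : Sig} {k : ℕ} {Γ : Fin k → Dt}

/-- All variables of the good term are among the first `m` ones. -/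
def Below (m : ℕ) : {D : Dt} → Good S k Γ D → Prop
  | _, .var i => (i : ℕ) < m
  | _, .node _ args => ∀ i, (args i).Below m

open Classical in
/-- The good term with its first `m` variables set to `a` and every subterm in these variables
replaced by the encoding of its value. The remaining variables are de Bruijn indices
referring to `k` enclosing abstractions, the first variable being bound outermost. -/
noncomputable def partialEnc (a : (i : Fin k) → (Γ i).carrier) (m : ℕ) :
    {D : Dt} → Good S k Γ D → LamF S
  | _, .var i => if (i : ℕ) < m then enc (Γ i) (a i) else LamF.var (k - 1 - i)
  | _, .node f args =>
    if ∀ i, (args i).Below m then enc (S.cod f) (S.interp f fun i => (args i).eval a)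
    else apps (const f) (List.ofFn fun i => (args i).partialEnc a m)

open Classical in
/-- Number of nodes of the good term left unevaluated once the first `m` variables are set. -/
noncomputable def openNodes (m : ℕ) : {D : Dt} → Good S k Γ D → ℕ
  | _, .var _ => 0
  | _, .node _ args =>
    if ∀ i, (args i).Below m then 0 else 1 + ∑ i, (args i).openNodes m

theorem Below.succ {m : ℕ} {D : Dt} {t : Good S k Γ D} (h : t.Below m) : t.Below (m + 1) := by
  induction t with
  | var i => exact Nat.lt_succ_of_lt h
  | node f args ih => exact fun i => ih i (h i)

theorem below_all {D : Dt} (t : Good S k Γ D) : t.Below k := by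
  induction t with
  | var i => exact i.2
  | node f args ih => exact ih

theorem partialEnc_of_below {a : (i : Fin k) → (Γ i).carrier} {m : ℕ} {D : Dt}
    {t : Good S k Γ D} (h : t.Below m) : t.partialEnc a m = enc D (t.eval a) := by
  cases t with
  | var i => exact if_pos h
  | node f args => exact if_pos h

theorem openNodes_of_below {m : ℕ} {D : Dt} {t : Good S k Γ D} (h : t.Below m) :
    t.openNodes m = 0 := by
  cases t with
  | var i => rfl
  | node f args => exact if_pos h

theorem not_isAbs_partialEnc {a : (i : Fin k) → (Γ i).carrier} {m : ℕ} {D : Dt}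
    {t : Good S k Γ D} (h : ¬ t.Below m) : ¬ IsAbs (t.partialEnc a m) := by
  cases t with
  | var i =>
    have h' : ¬ (i : ℕ) < m := h
    rw [partialEnc, if_neg h']
    exact id
  | node f args =>
    have h' : ¬ ∀ i, (args i).Below m := h
    rw [partialEnc, if_neg h']
    exact not_isAbs_apps id _

theorem not_hasF_partialEnc (a : (i : Fin k) → (Γ i).carrier) (m : ℕ) {D : Dt}
    (t : Good S k Γ D) : ¬ HasF (t.partialEnc a m) := by
  induction t with
  | var i =>
    rw [partialEnc]
    split_ifs
    exacts [not_hasF_enc _ _, not_hasF_var _]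
  | node f args ih =>
    by_cases h : ∀ i, (args i).Below m
    · rw [partialEnc, if_pos h]
      exact not_hasF_enc _ _
    · rw [partialEnc, if_neg h]
      push Not at h
      obtain ⟨i, hi⟩ := h
      exact not_hasF_const_apps_ofFn _ ih i (not_isAbs_partialEnc hi)

theorem closedAt_partialEnc (a : (i : Fin k) → (Γ i).carrier) (m : ℕ) {D : Dt}
    (t : Good S k Γ D) : ClosedAt k (t.partialEnc a m) := by
  induction t with
  | var i =>
    rw [partialEnc]
    split_ifs
    · exact closedAt_enc _ _ _
    · have := i.2
      change k - 1 - (i : ℕ) < k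
      omega
  | node f args ih =>
    rw [partialEnc]
    split_ifs
    · exact closedAt_enc _ _ _
    · refine closedAt_apps _ trivial fun x hx => ?_
      obtain ⟨j, rfl⟩ := (List.mem_ofFn' _ _).1 hx
      exact ih j

theorem eval_congr_of_below_zero (a b : (i : Fin k) → (Γ i).carrier) {D : Dt}
    {t : Good S k Γ D} (h : t.Below 0) : t.eval a = t.eval b := by
  induction t with
  | var i => exact absurd h (Nat.not_lt_zero _)
  | node f args ih => simp only [eval, fun i => ih i (h i)]

/-- With no variable set, the partially evaluated term is independent of the arguments. -/
theorem partialEnc_zero (a b : (i : Fin k) → (Γ i).carrier) {D : Dt} (t : Good S k Γ D) :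
    t.partialEnc a 0 = t.partialEnc b 0 := by
  induction t with
  | var i => simp [partialEnc]
  | node f args ih =>
    by_cases h : ∀ i, (args i).Below 0
    · rw [partialEnc, partialEnc, if_pos h, if_pos h]
      simp only [fun i => eval_congr_of_below_zero a b (h i)]
    · rw [partialEnc, partialEnc, if_neg h, if_neg h]
      simp only [ih]

/-- Setting one more variable triggers one `F`-step per newly evaluated node. -/
theorem fsteps_subst_partialEnc (a : (i : Fin k) → (Γ i).carrier) (m : Fin k) {D : Dt}
    (t : Good S k Γ D) :
    ∃ n, t.openNodes m = n + t.openNodes (m + 1) ∧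
      FSteps n ((t.partialEnc a m).subst (k - 1 - m) (enc (Γ m) (a m)))
        (t.partialEnc a (m + 1)) := by
  by_cases hb : t.Below m
  · refine ⟨0, by rw [openNodes_of_below hb, openNodes_of_below hb.succ], ?_⟩
    rw [partialEnc_of_below hb, partialEnc_of_below hb.succ, subst_enc]
    exact .refl _
  induction t with
  | var i =>
    refine ⟨0, by simp [openNodes], ?_⟩
    have hi : ¬ (i : ℕ) < m := hb
    rw [partialEnc, partialEnc, if_neg hi]
    by_cases him : i = m
    · subst him
      simpa [subst] using FSteps.refl _
    · have h1 : (m : ℕ) < i := lt_of_le_of_ne (not_lt.1 hi) fun h => him (Fin.ext h.symm)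
      have h2 := i.2
      rw [if_neg (by omega), subst, if_neg (by omega), if_neg (by omega)]
      exact .refl _
  | node f args ih =>
    have key : ∀ i, ∃ n, (args i).openNodes m = n + (args i).openNodes (m + 1) ∧
        FSteps n (((args i).partialEnc a m).subst (k - 1 - m) (enc (Γ m) (a m)))
          ((args i).partialEnc a (m + 1)) := by
      intro i
      by_cases hi : (args i).Below m
      · refine ⟨0, by rw [openNodes_of_below hi, openNodes_of_below hi.succ], ?_⟩
        rw [partialEnc_of_below hi, partialEnc_of_below hi.succ, subst_enc]
        exact .refl _
      · exact ih i hi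
    choose n hn hs using key
    have hargs := fsteps_apps_ofFn (const f) _ _ n hs
      (fun i => not_hasF_partialEnc a _ (args i)) (fun l => not_hasF_const_apps l)
    have hb' : ¬ ∀ i, (args i).Below m := hb
    rw [partialEnc, openNodes, if_neg hb', if_neg hb', subst_apps, List.map_ofFn]
    by_cases hc : ∀ i, (args i).Below (m + 1)
    · refine ⟨(∑ i, n i) + 1, ?_, ?_⟩
      · rw [openNodes, if_pos hc, Nat.add_comm, Nat.add_zero]
        simp only [hn, openNodes_of_below (hc _), Nat.add_zero]
      · refine FSteps.trans hargs (.step (.ax ?_) (.refl _))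
        rw [partialEnc, if_pos hc]
        simp only [partialEnc_of_below (hc _)]
        exact .intro f _
    · refine ⟨∑ i, n i, ?_, ?_⟩
      · rw [openNodes, if_neg hc]
        simp only [hn, Finset.sum_add_distrib]
        omega
      · rw [partialEnc, if_neg hc]
        exact hargs

end Good

/-! ### The update term -/

namespace LamF

variable {S : Sig}

/-- The term `y C ⋯ C` with `q` copies of `C = c_ω y v₂ ⋯ v_ℓ`, where `y` is the variable `0` and
the `v_i` encode default values. Setting `y` to `⌜v₁⌝` creates `q` `F`-redexes. -/
noncomputable def redexPad (w : S.Sym) (q : ℕ) (y : LamF S) : LamF S :=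
  apps y (List.ofFn fun _ : Fin q => apps (const w) (List.ofFn fun i : Fin (S.arity w) =>
    if (i : ℕ) = 0 then y else enc (S.dom w i) default))

theorem subst_redexPad (w : S.Sym) (q : ℕ) (y : LamF S) (j : ℕ) (N : LamF S) :
    (redexPad w q y).subst j N = redexPad w q (y.subst j N) := by
  simp only [redexPad, subst_apps, List.map_ofFn]
  congr 2
  funext _
  simp only [Function.comp_apply, subst_apps, List.map_ofFn, subst]
  congr 2
  funext i
  by_cases hi : (i : ℕ) = 0 <;> simp [hi, subst_enc]

theorem closedAt_redexPad (w : S.Sym) (q : ℕ) {y : LamF S} {d : ℕ} (hy : ClosedAt d y) :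
    ClosedAt d (redexPad w q y) := by
  refine closedAt_apps _ hy fun x hx => ?_
  obtain ⟨j, rfl⟩ := (List.mem_ofFn' _ _).1 hx
  refine closedAt_apps _ trivial fun x hx => ?_
  obtain ⟨j, rfl⟩ := (List.mem_ofFn' _ _).1 hx
  by_cases hj : (j : ℕ) = 0 <;> simp [hj, hy, closedAt_enc]

theorem not_hasF_redexPad (w : S.Sym) (hw : 1 ≤ S.arity w) (q j : ℕ) :
    ¬ HasF (redexPad w q (var j)) := by
  refine not_hasF_apps_of_head _ id (not_hasF_var _) fun x hx => ?_
  obtain ⟨_, rfl⟩ := (List.mem_ofFn' _ _).1 hx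
  refine not_hasF_const_apps_ofFn _ (fun i => ?_) ⟨0, hw⟩ (by simp [IsAbs])
  by_cases hi : (i : ℕ) = 0
  · simpa [hi] using not_hasF_var j
  · simpa [hi] using not_hasF_enc _ _

theorem fsteps_redexPad (w : S.Sym) (hw : 1 ≤ S.arity w) (q : ℕ) :
    ∃ T, ¬ HasF T ∧ FSteps q (redexPad w q (enc (S.dom w ⟨0, hw⟩) default)) T := by
  set v : LamF S := enc (S.dom w ⟨0, hw⟩) default
  have hvF : ¬ HasF v := not_hasF_enc _ _
  have hvH : ¬ ConstHead v := (isAbs_enc _ _).not_constHead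
  let R : LamF S := enc (S.cod w) (S.interp w fun i => default)
  refine ⟨apps v (List.ofFn fun _ : Fin q => R), ?_, ?_⟩
  · refine not_hasF_apps_of_head _ hvH hvF fun x hx => ?_
    obtain ⟨_, rfl⟩ := (List.mem_ofFn' _ _).1 hx
    exact not_hasF_enc _ _
  · have h := fsteps_apps_ofFn v (fun _ : Fin q => apps (const w) (List.ofFn fun i =>
      if (i : ℕ) = 0 then v else enc (S.dom w i) default)) (fun _ => R) (fun _ => 1)
      (fun _ => ?_) (fun _ => not_hasF_enc _ _)
      (fun l hl _ => not_hasF_apps_of_head l hvH hvF hl)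
    · simpa [redexPad] using h
    · have hl : (fun i : Fin (S.arity w) => if (i : ℕ) = 0 then v else enc (S.dom w i) default)
          = fun i => enc (S.dom w i) default := by
        funext i
        split_ifs with hi
        · obtain rfl : i = ⟨0, hw⟩ := Fin.ext hi
          rfl
        · rfl
      rw [hl]
      exact .step (.ax (.intro w _)) (.refl _)

variable {k : ℕ} {Δ : Fin k → Dt}

/-- The term `h h φ₁' ⋯ φ_k'`, where `φ_j'` is `φ_j` evaluated in its first `m` variables. -/
noncomputable def updBody (φ : (j : Fin k) → Good S k Δ (Δ j))
    (a : (i : Fin k) → (Δ i).carrier) (m : ℕ) (h : LamF S) : LamF S :=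
  apps (app h h) (List.ofFn fun j => (φ j).partialEnc a m)

/-- The term `(λy. (λz. λx₁ ⋯ x_k. h h φ₁' ⋯ φ_k') T_q) v`; `h` sits below `k + 2` binders. -/
noncomputable def updPad (φ : (j : Fin k) → Good S k Δ (Δ j)) (w : S.Sym) (hw : 1 ≤ S.arity w)
    (q : ℕ) (h : LamF S) : LamF S :=
  app (lam (app (lam (lams k (updBody φ (fun _ => default) 0 h))) (redexPad w q (var 0))))
    (enc (S.dom w ⟨0, hw⟩) default)

/-- The term `W` of which the update term `W W` consists. -/
noncomputable def updW (φ : (j : Fin k) → Good S k Δ (Δ j)) (w : S.Sym) (hw : 1 ≤ S.arity w)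
    (p q : ℕ) : LamF S :=
  lam (idPad p (updPad φ w hw q (var (k + 2))))

theorem closedAt_updBody (φ : (j : Fin k) → Good S k Δ (Δ j))
    (a : (i : Fin k) → (Δ i).carrier) (m : ℕ) {h : LamF S} {d : ℕ} (hd : k ≤ d)
    (hh : ClosedAt d h) : ClosedAt d (updBody φ a m h) := by
  refine closedAt_apps _ ⟨hh, hh⟩ fun x hx => ?_
  obtain ⟨j, rfl⟩ := (List.mem_ofFn' _ _).1 hx
  exact (Good.closedAt_partialEnc a m _).mono hd

theorem not_hasF_updBody (φ : (j : Fin k) → Good S k Δ (Δ j))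
    (a : (i : Fin k) → (Δ i).carrier) (m : ℕ) {h : LamF S} (hc : ¬ ConstHead h)
    (hh : ¬ HasF h) : ¬ HasF (updBody φ a m h) := by
  refine not_hasF_apps_of_head _ hc (not_hasF_app_of_head hc hh hh) fun x hx => ?_
  obtain ⟨j, rfl⟩ := (List.mem_ofFn' _ _).1 hx
  exact Good.not_hasF_partialEnc a m _

theorem closedAt_updW (φ : (j : Fin k) → Good S k Δ (Δ j)) (w : S.Sym) (hw : 1 ≤ S.arity w)
    (p q : ℕ) : ClosedAt 0 (updW φ w hw p q) := by
  suffices h : ClosedAt 1 (updPad φ w hw q (var (k + 2))) from closedAt_idPad (d := 1) h p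
  refine ⟨⟨?_, closedAt_redexPad w q ?_⟩, closedAt_enc _ _ _⟩
  · refine closedAt_lams (d := 3) k (closedAt_updBody φ _ _ (by omega) ?_)
    change k + 2 < 3 + k
    omega
  · exact Nat.succ_pos 1

theorem not_hasF_updPad (φ : (j : Fin k) → Good S k Δ (Δ j)) (w : S.Sym) (hw : 1 ≤ S.arity w)
    (q : ℕ) {h : LamF S} (hc : ¬ ConstHead h) (hh : ¬ HasF h) :
    ¬ HasF (updPad φ w hw q h) :=
  not_hasF_app_of_head id
    (not_hasF_lam <| not_hasF_app_of_head id
      (not_hasF_lam <| not_hasF_lams (not_hasF_updBody φ _ _ hc hh) k)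
      (not_hasF_redexPad w hw q 0))
    (not_hasF_enc _ _)

theorem subst_updBody (φ : (j : Fin k) → Good S k Δ (Δ j))
    (a : (i : Fin k) → (Δ i).carrier) (m : ℕ) (W : LamF S) :
    (updBody φ a m (var (k + 2))).subst (k + 2) W = updBody φ a m W := by
  simp only [updBody, subst_apps, List.map_ofFn, subst, if_true]
  congr 2
  funext j
  exact (Good.closedAt_partialEnc a m (φ j)).subst (by omega)

theorem subst_updPad (φ : (j : Fin k) → Good S k Δ (Δ j)) (w : S.Sym) (hw : 1 ≤ S.arity w)
    (q : ℕ) {W : LamF S} (hW : ClosedAt 0 W) :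
    (updPad φ w hw q (var (k + 2))).subst 0 W = updPad φ w hw q W := by
  simp only [updPad, subst, hW.lift (Nat.zero_le _), subst_lams hW, subst_redexPad, subst_enc]
  rw [show 0 + 1 + 1 + k = k + 2 by omega, subst_updBody]
  simp

/-- The `r = k - m` remaining arguments are consumed by one β-step each, and by one `F`-step for
each node still unevaluated. -/
theorem lSeq_updBody (φ : (j : Fin k) → Good S k Δ (Δ j)) (a : (i : Fin k) → (Δ i).carrier)
    {W : LamF S} (hW : ClosedAt 0 W) (hc : ¬ ConstHead W) (hF : ¬ HasF W) (r : ℕ) :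
    ∀ m, r + m = k →
      LSeq (apps (lams r (updBody φ a m W)) ((List.ofFn fun i => enc (Δ i) (a i)).drop m))
        r (∑ j, (φ j).openNodes m) (updBody φ a k W) := by
  induction r with
  | zero =>
    intro m hm
    obtain rfl : m = k := by omega
    rw [List.drop_of_length_le (by simp)]
    simp only [Good.openNodes_of_below (Good.below_all _), Finset.sum_const_zero]
    exact .refl _
  | succ r ih =>
    intro m hm
    have hmk : m < k := by omega
    rw [List.drop_eq_getElem_cons (by simpa using hmk)]
    simp only [List.getElem_ofFn]
    have hrest : ∀ x ∈ (List.ofFn fun i => (enc (Δ i) (a i) : LamF S)).drop (m + 1),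
        ¬ HasF x := by
      intro x hx
      obtain ⟨j, rfl⟩ := (List.mem_ofFn' _ _).1 (List.mem_of_mem_drop hx)
      exact not_hasF_enc _ _
    have hbeta := lSeq_beta (lams r (updBody φ a m W)) (enc (Δ ⟨m, hmk⟩) (a ⟨m, hmk⟩)) _
      (not_hasF_lams (not_hasF_updBody φ a m hc hF) r) (not_hasF_enc _ _) hrest
    choose n hn hs using fun j => Good.fsteps_subst_partialEnc a ⟨m, hmk⟩ (φ j)
    have hf := fsteps_apps_ofFn (app W W) _ _ n hs
      (fun j => Good.not_hasF_partialEnc a _ (φ j))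
      (fun l hl _ => not_hasF_apps_of_head l hc (not_hasF_app_of_head hc hF hF) hl)
    have hsub : (updBody φ a m W).subst (0 + r) (enc (Δ ⟨m, hmk⟩) (a ⟨m, hmk⟩)) =
        apps (app W W) (List.ofFn fun j => ((φ j).partialEnc a m).subst (k - 1 - m)
          (enc (Δ ⟨m, hmk⟩) (a ⟨m, hmk⟩))) := by
      rw [show 0 + r = k - 1 - m by omega]
      simp only [updBody, subst_apps, List.map_ofFn, subst, hW.subst (Nat.zero_le _)]
      rfl
    rw [subst_lams (closedAt_enc _ _ _), hsub] at hbeta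
    have htot := (hbeta.trans ((hf.lams r).apps _).lSeq).trans (ih (m + 1) (by omega))
    have hcnt : ∑ j, (φ j).openNodes m = ∑ j, n j + ∑ j, (φ j).openNodes (m + 1) := by
      rw [← Finset.sum_add_distrib]
      exact Finset.sum_congr rfl fun j _ => hn j
    rw [hcnt]
    exact htot.cast (by omega) (by omega)

end LamF

/-- Constant-cost updates: simultaneous update of all the state components by the
functions denoted by the good F-terms, at constant leftmost-reduction cost. -/
theorem constant_cost_updates (S : Sig) (hS : S.PadAssump) (k : ℕ) (Δ : Fin k → Dt)
    (φ : (j : Fin k) → Good S k Δ (Δ j)) :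
    ∃ Kmin Lmin : ℕ, ∀ K L : ℕ, Kmin ≤ K → Lmin ≤ L →
      ∃ θ : LamF S, ∀ a : (i : Fin k) → (Δ i).carrier,
        LamF.LSeq (LamF.apps θ (List.ofFn fun i => LamF.enc (Δ i) (a i))) K L
          (LamF.apps θ (List.ofFn fun j => LamF.enc (Δ j) ((φ j).eval a))) := by
  classical
  obtain ⟨w, hw, -, -⟩ := hS
  refine ⟨k + 3, ∑ j, (φ j).openNodes 0, fun K L hK hL => ?_⟩
  obtain ⟨p, rfl⟩ := Nat.exists_eq_add_of_le hK
  obtain ⟨q, rfl⟩ := Nat.exists_eq_add_of_le hL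
  set W := LamF.updW φ w hw p q with hWdef
  have hW : LamF.ClosedAt 0 W := LamF.closedAt_updW φ w hw p q
  have hc : ¬ LamF.ConstHead W := id
  have hpadF : ¬ LamF.HasF (LamF.idPad p (LamF.updPad φ w hw q (LamF.var (k + 2)))) :=
    LamF.not_hasF_idPad (LamF.not_hasF_updPad φ w hw q id (LamF.not_hasF_var _)) p
  have hF : ¬ LamF.HasF W := LamF.not_hasF_lam hpadF
  refine ⟨LamF.app W W, fun a => ?_⟩
  set as : List (LamF S) := List.ofFn fun i => LamF.enc (Δ i) (a i) with has
  have hasF : ∀ x ∈ as, ¬ LamF.HasF x := by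
    intro x hx
    obtain ⟨j, rfl⟩ := (List.mem_ofFn' _ _).1 hx
    exact LamF.not_hasF_enc _ _
  let d : (i : Fin k) → (Δ i).carrier := fun _ => default
  have hΛ : LamF.ClosedAt 0 (LamF.lams k (LamF.updBody φ d 0 W)) :=
    LamF.closedAt_lams k
      (LamF.closedAt_updBody φ d 0 (by omega) (hW.mono (Nat.zero_le _)))
  have hΛF : ¬ LamF.HasF (LamF.lams k (LamF.updBody φ d 0 W)) :=
    LamF.not_hasF_lams (LamF.not_hasF_updBody φ d 0 hc hF) k
  have s1 := LamF.lSeq_beta _ W as hpadF hF hasF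
  rw [LamF.subst_idPad, LamF.subst_updPad φ w hw q hW] at s1
  have s2 := LamF.lSeq_idPad (LamF.not_hasF_updPad φ w hw q hc hF) as hasF p
  have s3 := LamF.lSeq_beta
    (LamF.app (LamF.lam (LamF.lams k (LamF.updBody φ d 0 W))) (LamF.redexPad w q (LamF.var 0)))
    (LamF.enc (S.dom w ⟨0, hw⟩) default) as
    (LamF.not_hasF_app_of_head id (LamF.not_hasF_lam hΛF) (LamF.not_hasF_redexPad w hw q 0))
    (LamF.not_hasF_enc _ _) hasF
  obtain ⟨T, hT, hTs⟩ := LamF.fsteps_redexPad w hw q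
  have s4 := ((hTs.appR (LamF.not_hasF_lam hΛF)).apps as).lSeq
  have s5 := LamF.lSeq_beta _ T as hΛF hT hasF
  rw [hΛ.subst (Nat.zero_le _)] at s5
  have s6 := LamF.lSeq_updBody φ a hW hc hF k 0 (by omega)
  have hbody : LamF.updBody φ a 0 W = LamF.updBody φ d 0 W := by
    simp only [LamF.updBody, fun j => Good.partialEnc_zero a d (φ j)]
  have hend : LamF.updBody φ a k W = LamF.apps (LamF.app W W)
      (List.ofFn fun j => LamF.enc (Δ j) ((φ j).eval a)) := by
    simp only [LamF.updBody, Good.partialEnc_of_below (Good.below_all _)]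
  rw [hbody, hend, List.drop_zero, ← has] at s6
  simp only [LamF.subst, LamF.subst_redexPad, if_true, hΛ.subst (Nat.zero_le _)] at s3
  exact (((((s1.trans s2).trans s3).trans s4).trans s5).trans s6).cast (by omega) (by omega)
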